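/- For every λ ∈ ℂ and every integer n ≥ 1, the ℂ-linear operator N⊗1 + 1⊗J_n(λ) on ℂ²⊗_ℂℂⁿ, where N is the 2×2 nilpotent Jordan block and J_n(λ) the n×n Jordan block with eigenvalue λ, is similar to the direct sum J_{n+1}(λ) ⊕ J_{n−1}(λ) (the second summand being absent when n = 1). Equivalently, as modules over the one-dimensional Lie algebra ℂg with g acting by N on ℂ² and by J_n(λ) on ℂⁿ, one has ℂ²⊗M(n,λ) ≅ M(n+1,λ) ⊕ M(n−1,λ). -/

import Mathlib

/-!
Statement 19.  For every `lam ∈ ℂ` and every integer `n ≥ 1`, the operator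
`N ⊗ 1 + 1 ⊗ J_n(lam)` on `ℂ² ⊗ ℂⁿ` (where `N = J₂(0)` is the 2×2 nilpotent
Jordan block and `J_n(lam)` the `n×n` Jordan block with eigenvalue `lam`) is
similar to `J_{n+1}(lam) ⊕ J_{n-1}(lam)` (the second summand being absent when
`n = 1`, since `Fin (n-1)` is then empty).  Equivalently, for the
one-dimensional Lie algebra `ℂg` acting by `N` on `ℂ²` and by `J_n(lam)` on
`ℂⁿ` one has `ℂ² ⊗ M(n,lam) ≅ M(n+1,lam) ⊕ M(n-1,lam)`, where `g` acts on a
tensor product by `g·(u⊗v) = gu⊗v + u⊗gv`, i.e. by the operator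
`N ⊗ 1 + 1 ⊗ J_n(lam)`.
-/

/-- The `n × n` Jordan block with eigenvalue `lam`: `lam` on the diagonal and
`1` on the superdiagonal. -/
def jordanBlock (n : ℕ) (lam : ℂ) : Matrix (Fin n) (Fin n) ℂ :=
  Matrix.of fun i j => if (j : ℕ) = (i : ℕ) then lam
    else if (j : ℕ) = (i : ℕ) + 1 then 1 else 0

/-!
Identify `Rⁿ` with the sequences vanishing from index `n` on, and a sequence `s` with its
exponential generating function `∑ sᵢ Xⁱ / i!`. The Jordan block then acts as `A = c + S`, where
`S = d/dX` is the shift, and multiplication by `X` is an operator `D` with `[A, D] = [S, D] = 1`.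
On pairs of sequences the tensor product operator is `(a, b) ↦ (A a + b, A b)`, and the Weyl
relation says precisely that `(a, b) ↦ x = a + D b` intertwines it with `A`. Since `S` commutes
with `A`, so does `(a, b) ↦ y = S x - n b`, and `(a, b)` can be recovered from `(x, y)` when `n` is
invertible. The coefficient `n` is the one for which `y` vanishes already from index `n - 1` on.
-/

lemma exists_linearEquiv_of_mem_range_iff {R V W M N : Type*} [Semiring R]
    [AddCommMonoid V] [Module R V] [AddCommMonoid W] [Module R W]
    [AddCommMonoid M] [Module R M] [AddCommMonoid N] [Module R N]
    {f : V →ₗ[R] M} {g : W →ₗ[R] N} (hf : Function.Injective f) (hg : Function.Injective g)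
    (e : M ≃ₗ[R] N) (he : ∀ p, e p ∈ LinearMap.range g ↔ p ∈ LinearMap.range f) :
    ∃ φ : V ≃ₗ[R] W, ∀ v, g (φ v) = e (f v) := by
  have hmap : (LinearMap.range f).map (e : M →ₗ[R] N) = LinearMap.range g := by
    ext q
    rw [Submodule.mem_map_equiv, ← he, e.apply_symm_apply]
  let φ := LinearEquiv.ofInjective f hf ≪≫ₗ e.ofSubmodules _ _ hmap
    ≪≫ₗ (LinearEquiv.ofInjective g hg).symm
  refine ⟨φ, fun v => ?_⟩
  exact congrArg Subtype.val ((LinearEquiv.ofInjective g hg).apply_symm_apply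
    (e.ofSubmodules _ _ hmap (LinearEquiv.ofInjective f hf v)))

section Weyl

variable {R M : Type*} [CommRing R] [AddCommGroup M] [Module R M]

/-- The automorphism `(a, b) ↦ (x, S x - u b)` of `M × M`, where `x = a + D b`. It conjugates
`(a, b) ↦ (A a + b, A b)` to `A × A` for every `A` that commutes with `S` and has `[A, D] = 1`. -/
def weylSplitting (S D : Module.End R M) (u : Rˣ) : (M × M) ≃ₗ[R] M × M where
  toFun p := (p.1 + D p.2, S (p.1 + D p.2) - u • p.2)
  invFun q := (q.1 - D (u⁻¹ • (S q.1 - q.2)), u⁻¹ • (S q.1 - q.2))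
  map_add' p q := by
    ext <;> simp only [Prod.fst_add, Prod.snd_add, map_add, smul_add] <;> abel
  map_smul' c p := by
    ext <;> simp only [Prod.smul_fst, Prod.smul_snd, map_smul, map_add, smul_add, smul_sub,
      RingHom.id_apply, smul_comm u c]
  left_inv p := by simp
  right_inv q := by simp

lemma weylSplitting_apply (S D : Module.End R M) (u : Rˣ) (a b : M) :
    weylSplitting S D u (a, b) = (a + D b, S (a + D b) - u • b) := rfl

lemma weylSplitting_intertwines {S D A : Module.End R M} (hSA : Commute S A) (hAD : ⁅A, D⁆ = 1)
    (u : Rˣ) (a b : M) :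
    weylSplitting S D u (A a + b, A b) = A.prodMap A (weylSplitting S D u (a, b)) := by
  have weyl : A (D b) = D (A b) + b := by
    simpa [Ring.lie_def, sub_eq_iff_eq_add'] using LinearMap.congr_fun hAD b
  have hx : A a + b + D (A b) = A (a + D b) := by rw [map_add, weyl]; abel
  have hy : S (A (a + D b)) = A (S (a + D b)) := LinearMap.congr_fun hSA (a + D b)
  simp only [weylSplitting_apply, LinearMap.prodMap_apply, hx, hy, map_sub, Units.smul_def,
    map_smul]

end Weyl

section ZeroExtend

/-- The embedding of `Rⁿ` into the sequences that extends vectors by zero. -/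
noncomputable def zeroExtend (R : Type*) [Semiring R] (n : ℕ) : (Fin n → R) →ₗ[R] ℕ → R :=
  Function.ExtendByZero.linearMap R Fin.val

variable {R : Type*} [Semiring R]

lemma zeroExtend_apply_fin {n : ℕ} (w : Fin n → R) (i : Fin n) : zeroExtend R n w i = w i :=
  Fin.val_injective.extend_apply w 0 i

lemma zeroExtend_apply_of_le {n i : ℕ} (w : Fin n → R) (hi : n ≤ i) : zeroExtend R n w i = 0 :=
  Function.extend_apply' w _ i (by rintro ⟨j, rfl⟩; exact hi.not_gt j.isLt)

lemma zeroExtend_single {n : ℕ} (j : Fin n) (r : R) :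
    zeroExtend R n (Pi.single j r) = Pi.single (j : ℕ) r := by
  ext i
  rcases lt_or_ge i n with hi | hi
  · simp only [zeroExtend_apply_fin _ ⟨i, hi⟩, Pi.single_apply, Fin.ext_iff]
  · rw [zeroExtend_apply_of_le _ hi, Pi.single_eq_of_ne (j.isLt.trans_le hi).ne']

lemma zeroExtend_injective (n : ℕ) : Function.Injective (zeroExtend R n) :=
  Function.extend_injective Fin.val_injective 0

lemma mem_range_zeroExtend {n : ℕ} {s : ℕ → R} :
    s ∈ LinearMap.range (zeroExtend R n) ↔ ∀ i, n ≤ i → s i = 0 := by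
  constructor
  · rintro ⟨w, rfl⟩ i hi
    exact zeroExtend_apply_of_le w hi
  · refine fun hs => ⟨fun i => s i, funext fun i => ?_⟩
    rcases lt_or_ge i n with hi | hi
    · exact zeroExtend_apply_fin _ ⟨i, hi⟩
    · rw [zeroExtend_apply_of_le _ hi, hs i hi]

end ZeroExtend

section Sequences

variable (R : Type*) [CommRing R]

/-- The left shift on sequences, which is differentiation of exponential generating functions. -/
def seqShift : Module.End R (ℕ → R) := LinearMap.funLeft R R Nat.succ

/-- The weighted right shift on sequences, which is multiplication of exponential generating
functions by the variable. The value at `0` is `0` because of the weight, whatever `0 - 1` is. -/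
def seqRaise : Module.End R (ℕ → R) where
  toFun s i := i * s (i - 1)
  map_add' s t := by ext i; exact mul_add _ _ _
  map_smul' c s := by ext i; exact mul_left_comm _ _ _

variable {R}

lemma seqShift_apply (s : ℕ → R) (i : ℕ) : seqShift R s i = s (i + 1) := rfl

lemma seqRaise_apply_zero (s : ℕ → R) : seqRaise R s 0 = 0 := by simp [seqRaise]

lemma seqRaise_apply_succ (s : ℕ → R) (i : ℕ) : seqRaise R s (i + 1) = (i + 1) * s i := by
  simp [seqRaise]

lemma lie_seqShift_seqRaise : ⁅seqShift R, seqRaise R⁆ = 1 := by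
  refine LinearMap.ext fun s => funext fun i => ?_
  simp only [Ring.lie_def, LinearMap.sub_apply, Module.End.mul_apply, Pi.sub_apply,
    Module.End.one_apply, seqShift_apply]
  cases i with
  | zero => simp [seqRaise_apply_succ, seqRaise_apply_zero]
  | succ i => simp only [seqRaise_apply_succ, seqShift_apply]; push_cast; ring

/-- The action of an infinite Jordan block with eigenvalue `c` on sequences. -/
def seqJordan (c : R) : Module.End R (ℕ → R) := algebraMap R _ c + seqShift R

lemma seqJordan_apply (c : R) (s : ℕ → R) (i : ℕ) : seqJordan c s i = c * s i + s (i + 1) := rfl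

lemma commute_seqShift_seqJordan (c : R) : Commute (seqShift R) (seqJordan c) :=
  (Algebra.commute_algebraMap_right c _).add_right (Commute.refl _)

lemma lie_seqJordan_seqRaise (c : R) : ⁅seqJordan c, seqRaise R⁆ = 1 := by
  rw [← lie_seqShift_seqRaise, seqJordan, Ring.lie_def, Ring.lie_def, add_mul, mul_add,
    Algebra.commutes, add_sub_add_left_eq_sub]

lemma weylSplitting_fst_apply_succ (u : Rˣ) (a b : ℕ → R) (i : ℕ) :
    (weylSplitting (seqShift R) (seqRaise R) u (a, b)).1 (i + 1) = a (i + 1) + (i + 1) * b i := by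
  simp only [weylSplitting_apply, Pi.add_apply, seqRaise_apply_succ]

lemma weylSplitting_snd_apply (u : Rˣ) (a b : ℕ → R) (i : ℕ) :
    (weylSplitting (seqShift R) (seqRaise R) u (a, b)).2 i = a (i + 1) + (i + 1 - u) * b i := by
  simp only [weylSplitting_apply, Pi.sub_apply, seqShift_apply, Pi.add_apply, seqRaise_apply_succ,
    Pi.smul_apply, Units.smul_def, smul_eq_mul]
  ring

lemma weylSplitting_mem_range_zeroExtend_iff {m : ℕ} {u : Rˣ} (hu : (u : R) = m + 1)
    (p : (ℕ → R) × (ℕ → R)) :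
    weylSplitting (seqShift R) (seqRaise R) u p ∈
        LinearMap.range ((zeroExtend R (m + 2)).prodMap (zeroExtend R m)) ↔
      p ∈ LinearMap.range ((zeroExtend R (m + 1)).prodMap (zeroExtend R (m + 1))) := by
  obtain ⟨a, b⟩ := p
  have hfst := weylSplitting_fst_apply_succ u a b
  have hsnd := weylSplitting_snd_apply u a b
  simp only [LinearMap.range_prodMap, Submodule.mem_prod, mem_range_zeroExtend]
  generalize weylSplitting (seqShift R) (seqRaise R) u (a, b) = q at hfst hsnd ⊢
  obtain ⟨x, y⟩ := q
  constructor
  · rintro ⟨hx, hy⟩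
    have hb (i : ℕ) (hi : m + 1 ≤ i) : b i = 0 := by
      refine u.mul_right_eq_zero.mp ?_
      linear_combination hsnd i - hfst i + hx (i + 1) (by omega) - hy i (by omega)
    refine ⟨fun i hi => ?_, hb⟩
    obtain ⟨i, rfl⟩ := Nat.exists_eq_add_of_le' (Nat.one_le_of_lt hi)
    rcases (Nat.le_of_succ_le_succ hi).eq_or_lt with rfl | hmi
    · linear_combination hy m le_rfl - hsnd m + b m * hu
    · linear_combination hy i hmi.le - hsnd i - (i + 1 - u : R) * hb i hmi
  · rintro ⟨ha, hb⟩
    refine ⟨fun i hi => ?_, fun i hi => ?_⟩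
    · obtain ⟨i, rfl⟩ := Nat.exists_eq_add_of_le' (Nat.one_le_of_lt hi)
      rw [hfst, ha _ (by omega), hb _ (by omega), mul_zero, add_zero]
    · rw [hsnd, ha _ (by omega), zero_add]
      rcases hi.eq_or_lt with rfl | hmi
      · rw [hu, sub_self, zero_mul]
      · rw [hb i hmi, mul_zero]

end Sequences

section JordanMatrix

open scoped Kronecker

variable {R : Type*} [CommRing R]

/-- `jordanBlock` over an arbitrary commutative ring. -/
def jordanMatrix (n : ℕ) (c : R) : Matrix (Fin n) (Fin n) R :=
  Matrix.of fun i j => if (j : ℕ) = (i : ℕ) then c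
    else if (j : ℕ) = (i : ℕ) + 1 then 1 else 0

lemma jordanMatrix_apply_eq_seqJordan_single {n : ℕ} (c : R) (i j : Fin n) :
    jordanMatrix n c i j = seqJordan c (Pi.single (j : ℕ) 1) i := by
  simp only [jordanMatrix, Matrix.of_apply, seqJordan_apply, Pi.single_apply]
  split_ifs <;> first | omega | simp

lemma zeroExtend_jordanMatrix_mulVec {n : ℕ} (c : R) (w : Fin n → R) :
    zeroExtend R n ((jordanMatrix n c).mulVec w) = seqJordan c (zeroExtend R n w) := by
  suffices h : zeroExtend R n ∘ₗ (jordanMatrix n c).mulVecLin = seqJordan c ∘ₗ zeroExtend R n from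
    LinearMap.congr_fun h w
  refine LinearMap.pi_ext' fun j => LinearMap.ext_ring (funext fun i => ?_)
  simp only [LinearMap.comp_apply, LinearMap.single_apply, Matrix.mulVecLin_apply,
    Matrix.mulVec_single_one, zeroExtend_single]
  rcases lt_or_ge i n with hi | hi
  · rw [zeroExtend_apply_fin _ ⟨i, hi⟩]
    exact jordanMatrix_apply_eq_seqJordan_single c ⟨i, hi⟩ j
  · have hij : i ≠ j := (j.isLt.trans_le hi).ne'
    have hij' : i + 1 ≠ j := (j.isLt.trans_le (Nat.le_succ_of_le hi)).ne'
    rw [zeroExtend_apply_of_le _ hi, seqJordan_apply, Pi.single_eq_of_ne hij,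
      Pi.single_eq_of_ne hij', mul_zero, add_zero]

lemma exists_linearEquiv_jordanMatrix_prod (c : R) {m : ℕ} (hm : IsUnit (m + 1 : R)) :
    ∃ φ : ((Fin (m + 1) → R) × (Fin (m + 1) → R)) ≃ₗ[R] (Fin (m + 2) → R) × (Fin m → R),
      ∀ a b, φ ((jordanMatrix (m + 1) c).mulVec a + b, (jordanMatrix (m + 1) c).mulVec b) =
        ((jordanMatrix (m + 2) c).mulVec (φ (a, b)).1, (jordanMatrix m c).mulVec (φ (a, b)).2) := by
  obtain ⟨u, hu⟩ := hm
  let f := (zeroExtend R (m + 1)).prodMap (zeroExtend R (m + 1))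
  let g := (zeroExtend R (m + 2)).prodMap (zeroExtend R m)
  have hf : Function.Injective f := (zeroExtend_injective _).prodMap (zeroExtend_injective _)
  have hg : Function.Injective g := (zeroExtend_injective _).prodMap (zeroExtend_injective _)
  obtain ⟨φ, hφ⟩ := exists_linearEquiv_of_mem_range_iff hf hg _
    (weylSplitting_mem_range_zeroExtend_iff hu)
  refine ⟨φ, fun a b => hg ?_⟩
  have hgJ (q : (Fin (m + 2) → R) × (Fin m → R)) :
      g ((jordanMatrix (m + 2) c).mulVec q.1, (jordanMatrix m c).mulVec q.2) =
        (seqJordan c).prodMap (seqJordan c) (g q) :=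
    Prod.ext (zeroExtend_jordanMatrix_mulVec c q.1) (zeroExtend_jordanMatrix_mulVec c q.2)
  rw [hgJ, hφ, hφ]
  simp only [f, LinearMap.prodMap_apply, map_add, zeroExtend_jordanMatrix_mulVec]
  exact weylSplitting_intertwines (commute_seqShift_seqJordan c) (lie_seqJordan_seqRaise c) u _ _

lemma kronecker_one_mulVec {S k l n : Type*} [NonAssocSemiring S] [Fintype l] [Fintype n]
    [DecidableEq n] (A : Matrix k l S) (v : l × n → S) (i : k) (j : n) :
    (A ⊗ₖ (1 : Matrix n n S)).mulVec v (i, j) = A.mulVec (fun i' => v (i', j)) i := by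
  simp [Matrix.mulVec, dotProduct, Fintype.sum_prod_type, Matrix.one_apply]

lemma one_kronecker_mulVec {S k l n : Type*} [NonAssocSemiring S] [Fintype k] [Fintype l]
    [DecidableEq k] (A : Matrix n l S) (v : k × l → S) (i : k) (j : n) :
    ((1 : Matrix k k S) ⊗ₖ A).mulVec v (i, j) = A.mulVec (fun j' => v (i, j')) j := by
  simp [Matrix.mulVec, dotProduct, Fintype.sum_prod_type, Matrix.one_apply]

/-- The coordinates of a vector of `R² ⊗ Rⁿ` along the two basis vectors of `R²`. -/
def tensorEquivProd (R : Type*) [CommRing R] (n : ℕ) :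
    (Fin 2 × Fin n → R) ≃ₗ[R] (Fin n → R) × (Fin n → R) :=
  LinearEquiv.curry R R (Fin 2) (Fin n) ≪≫ₗ LinearEquiv.finTwoArrow R (Fin n → R)

lemma tensorEquivProd_apply {n : ℕ} (v : Fin 2 × Fin n → R) :
    tensorEquivProd R n v = (fun i => v (0, i), fun i => v (1, i)) := rfl

lemma tensorEquivProd_mulVec {n : ℕ} (J : Matrix (Fin n) (Fin n) R) (v : Fin 2 × Fin n → R) :
    tensorEquivProd R n ((jordanMatrix 2 0 ⊗ₖ 1 + 1 ⊗ₖ J).mulVec v) =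
      (J.mulVec (tensorEquivProd R n v).1 + (tensorEquivProd R n v).2,
        J.mulVec (tensorEquivProd R n v).2) := by
  simp only [tensorEquivProd_apply, Matrix.add_mulVec, Pi.add_apply, kronecker_one_mulVec,
    one_kronecker_mulVec]
  ext i <;> simp [jordanMatrix, Matrix.mulVec, dotProduct, add_comm]

theorem jordan_block_tensor_decomposition_general (c : R) {m : ℕ} (hm : IsUnit (m + 1 : R)) :
    ∃ φ : (Fin 2 × Fin (m + 1) → R) ≃ₗ[R] (Fin (m + 2) ⊕ Fin m → R),
      ∀ v : Fin 2 × Fin (m + 1) → R,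
        φ (Matrix.toLin' (jordanMatrix 2 0 ⊗ₖ 1 + 1 ⊗ₖ jordanMatrix (m + 1) c) v) =
          Matrix.toLin'
            (Matrix.fromBlocks (jordanMatrix (m + 2) c) 0 0 (jordanMatrix m c)) (φ v) := by
  obtain ⟨φ, hφ⟩ := exists_linearEquiv_jordanMatrix_prod c hm
  let e := LinearEquiv.sumArrowLequivProdArrow (Fin (m + 2)) (Fin m) R R
  have he (w : Fin (m + 2) ⊕ Fin m → R) :
      e ((Matrix.fromBlocks (jordanMatrix (m + 2) c) 0 0 (jordanMatrix m c)).mulVec w) =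
        ((jordanMatrix (m + 2) c).mulVec (e w).1, (jordanMatrix m c).mulVec (e w).2) := by
    rw [Matrix.fromBlocks_mulVec]
    simp only [Matrix.zero_mulVec, add_zero, zero_add]
    rfl
  refine ⟨tensorEquivProd R (m + 1) ≪≫ₗ φ ≪≫ₗ e.symm, fun v => e.injective ?_⟩
  simp only [LinearEquiv.trans_apply, Matrix.toLin'_apply, he, LinearEquiv.apply_symm_apply,
    tensorEquivProd_mulVec, hφ]

end JordanMatrix

theorem jordan_block_tensor_decomposition (lam : ℂ) (n : ℕ) (hn : 1 ≤ n) :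
    ∃ φ : ((Fin 2 × Fin n) → ℂ) ≃ₗ[ℂ] ((Fin (n + 1) ⊕ Fin (n - 1)) → ℂ),
      ∀ v : (Fin 2 × Fin n) → ℂ,
        φ (Matrix.toLin'
            (Matrix.kroneckerMap (· * ·) (jordanBlock 2 0)
                (1 : Matrix (Fin n) (Fin n) ℂ)
              + Matrix.kroneckerMap (· * ·) (1 : Matrix (Fin 2) (Fin 2) ℂ)
                (jordanBlock n lam)) v)
          = Matrix.toLin'
              (Matrix.fromBlocks (jordanBlock (n + 1) lam) 0 0
                (jordanBlock (n - 1) lam)) (φ v) := by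
  obtain ⟨m, rfl⟩ := Nat.exists_eq_add_of_le' hn
  exact jordan_block_tensor_decomposition_general lam
    (isUnit_iff_ne_zero.mpr (Nat.cast_add_one_ne_zero m))
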